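/- Every connected non-degenerate trigraph G has an optimal antithickening, and any two optimal antithickenings of G are isomorphic as trigraphs. -/

import Mathlib

/-- A trigraph on a vertex type `V`: a symmetric adjacency function with values in
`{1, 0, -1}`, zero on the diagonal, such that semiedges form a matching. -/
structure Trigraph (V : Type) where
  θ : V → V → ℤ
  range_mem : ∀ u v, θ u v = 1 ∨ θ u v = 0 ∨ θ u v = -1
  symm : ∀ u v, θ u v = θ v u
  refl_zero : ∀ v, θ v v = 0
  semi_matching : ∀ u v w : V, u ≠ v → u ≠ w → v ≠ w → θ u v = 0 → θ u w ≠ 0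

namespace Trigraph

variable {V V' V'' : Type}

/-- `u` and `v` are strongly adjacent. -/
def StrongAdj (G : Trigraph V) (u v : V) : Prop := G.θ u v = 1

/-- Distinct `u` and `v` are semiadjacent. -/
def SemiAdj (G : Trigraph V) (u v : V) : Prop := u ≠ v ∧ G.θ u v = 0

/-- Distinct `u` and `v` are adjacent. -/
def Adj (G : Trigraph V) (u v : V) : Prop := u ≠ v ∧ (G.θ u v = 1 ∨ G.θ u v = 0)

/-- Distinct `u` and `v` are antiadjacent. -/
def AntiAdj (G : Trigraph V) (u v : V) : Prop := u ≠ v ∧ (G.θ u v = 0 ∨ G.θ u v = -1)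

/-- `u` and `v` are strongly antiadjacent. -/
def StrongAntiAdj (G : Trigraph V) (u v : V) : Prop := G.θ u v = -1

/-- `X` is strongly complete to `Y`. -/
def StronglyComplete (G : Trigraph V) (X Y : Set V) : Prop :=
  ∀ u ∈ X, ∀ v ∈ Y, G.StrongAdj u v

/-- `X` is strongly anticomplete to `Y`. -/
def StronglyAnticomplete (G : Trigraph V) (X Y : Set V) : Prop :=
  ∀ u ∈ X, ∀ v ∈ Y, G.StrongAntiAdj u v

/-- A strong clique: pairwise strongly adjacent vertices. -/
def IsStrongClique (G : Trigraph V) (K : Set V) : Prop := K.Pairwise G.StrongAdj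

/-- A stable set: pairwise antiadjacent vertices. -/
def IsStableSet (G : Trigraph V) (S : Set V) : Prop := S.Pairwise G.AntiAdj

/-- The neighbourhood of a vertex: the set of vertices adjacent to it. -/
def neighborhood (G : Trigraph V) (v : V) : Set V := {u | G.Adj v u}

/-- Claw-free: no vertex has three pairwise antiadjacent vertices in its neighbourhood. -/
def ClawFree (G : Trigraph V) : Prop :=
  ¬ ∃ v a b c : V, G.Adj v a ∧ G.Adj v b ∧ G.Adj v c ∧
    G.AntiAdj a b ∧ G.AntiAdj a c ∧ G.AntiAdj b c

/-- Cobipartite: the vertex set is the union of two strong cliques. -/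
def Cobipartite (G : Trigraph V) : Prop :=
  ∃ K1 K2 : Set V, G.IsStrongClique K1 ∧ G.IsStrongClique K2 ∧ K1 ∪ K2 = Set.univ

/-- Quasi-line: the neighbourhood of every vertex is the union of two strong cliques. -/
def QuasiLine (G : Trigraph V) : Prop :=
  ∀ v : V, ∃ K1 K2 : Set V, G.IsStrongClique K1 ∧ G.IsStrongClique K2 ∧
    G.neighborhood v = K1 ∪ K2

/-- Connected: any two vertices are joined by a sequence of consecutively adjacent vertices. -/
def Connected (G : Trigraph V) : Prop :=
  ∀ u v : V, Relation.ReflTransGen G.Adj u v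

/-- Non-degenerate: quasi-line and not cobipartite, or claw-free with stability number ≥ 3. -/
def NonDegenerate (G : Trigraph V) : Prop :=
  (G.QuasiLine ∧ ¬ G.Cobipartite) ∨
  (G.ClawFree ∧ ∃ S : Set V, G.IsStableSet S ∧ 3 ≤ S.ncard)

/-- A homogeneous set: `|V| > |X| ≥ 2` and every vertex outside `X` is strongly complete
or strongly anticomplete to `X`. -/
def HomogeneousSet (G : Trigraph V) (X : Set V) : Prop :=
  2 ≤ X.ncard ∧ X ≠ Set.univ ∧
  ∀ v ∉ X, G.StronglyComplete {v} X ∨ G.StronglyAnticomplete {v} X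

/-- `v1 v2 v3 v4` is a square: the pairs `v1v3`, `v2v4` are antiadjacent and the other
four pairs are adjacent. -/
def IsSquare (G : Trigraph V) (v1 v2 v3 v4 : V) : Prop :=
  G.AntiAdj v1 v3 ∧ G.AntiAdj v2 v4 ∧
  G.Adj v1 v2 ∧ G.Adj v2 v3 ∧ G.Adj v3 v4 ∧ G.Adj v4 v1

/-- `X` contains a square. -/
def HasSquareIn (G : Trigraph V) (X : Set V) : Prop :=
  ∃ v1 v2 v3 v4 : V, G.IsSquare v1 v2 v3 v4 ∧ ({v1, v2, v3, v4} : Set V) ⊆ X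

/-- Homogeneous pair of strong cliques `(A, B)`. -/
def HPOSC (G : Trigraph V) (A B : Set V) : Prop :=
  A.Nonempty ∧ B.Nonempty ∧ Disjoint A B ∧
  G.IsStrongClique A ∧ G.IsStrongClique B ∧
  ¬ (∃ a b : V, A = {a} ∧ B = {b}) ∧
  ∀ v ∉ A ∪ B,
    (G.StronglyComplete {v} A ∨ G.StronglyAnticomplete {v} A) ∧
    (G.StronglyComplete {v} B ∨ G.StronglyAnticomplete {v} B)

/-- Deletion-minimal homogeneous pair of strong cliques. -/
def DeletionMinimal (G : Trigraph V) (A B : Set V) : Prop :=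
  G.HPOSC A B ∧ G.HasSquareIn (A ∪ B) ∧
  (∀ a ∈ A, ¬ G.StronglyComplete {a} B ∧ ¬ G.StronglyAnticomplete {a} B) ∧
  (∀ b ∈ B, ¬ G.StronglyComplete {b} A ∧ ¬ G.StronglyAnticomplete {b} A)

/-- There is a square contained in `X` intersecting both `S1` and `S2`. -/
def SquareMeets (G : Trigraph V) (X S1 S2 : Set V) : Prop :=
  ∃ v1 v2 v3 v4 : V, G.IsSquare v1 v2 v3 v4 ∧ ({v1, v2, v3, v4} : Set V) ⊆ X ∧
    (({v1, v2, v3, v4} : Set V) ∩ S1).Nonempty ∧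
    (({v1, v2, v3, v4} : Set V) ∩ S2).Nonempty

/-- Square-connected homogeneous pair of strong cliques. -/
def SquareConnected (G : Trigraph V) (A B : Set V) : Prop :=
  G.HPOSC A B ∧
  (∀ A' A'' : Set V, A'.Nonempty → A''.Nonempty → A' ∪ A'' = A → Disjoint A' A'' →
    G.SquareMeets (A ∪ B) A' A'') ∧
  (∀ B' B'' : Set V, B'.Nonempty → B''.Nonempty → B' ∪ B'' = B → Disjoint B' B'' →
    G.SquareMeets (A ∪ B) B' B'')

/-- Inclusion-maximal square-connected homogeneous pair of strong cliques. -/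
def MaxSquareConnected (G : Trigraph V) (A B : Set V) : Prop :=
  G.SquareConnected A B ∧
  ∀ A' B' : Set V, G.SquareConnected A' B' → A ⊆ A' → B ⊆ B' → A' = A ∧ B' = B

/-- Two homogeneous pairs have skew intersection if a part of one intersects both
parts of the other. -/
def SkewIntersection (A1 B1 A2 B2 : Set V) : Prop :=
  ((A1 ∩ A2).Nonempty ∧ (A1 ∩ B2).Nonempty) ∨
  ((B1 ∩ A2).Nonempty ∧ (B1 ∩ B2).Nonempty) ∨
  ((A2 ∩ A1).Nonempty ∧ (A2 ∩ B1).Nonempty) ∨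
  ((B2 ∩ A1).Nonempty ∧ (B2 ∩ B1).Nonempty)

/-- Laminar: contains no square-connected homogeneous pair of strong cliques. -/
def Laminar (G : Trigraph V) : Prop := ¬ ∃ A B : Set V, G.SquareConnected A B

/-- `G` is a thickening of `G'` via the map `I` (equivalently, `G'` is an antithickening
of `G`): the `I v` are nonempty strong cliques partitioning `V(G)` respecting adjacency. -/
def IsThickening (G : Trigraph V) (G' : Trigraph V') (I : V' → Set V) : Prop :=
  (∀ v : V', (I v).Nonempty ∧ G.IsStrongClique (I v)) ∧
  (∀ u v : V', u ≠ v → Disjoint (I u) (I v)) ∧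
  (⋃ v : V', I v) = Set.univ ∧
  ∀ u v : V', u ≠ v →
    (G'.StrongAdj u v → G.StronglyComplete (I u) (I v)) ∧
    (G'.StrongAntiAdj u v → G.StronglyAnticomplete (I u) (I v)) ∧
    (G'.SemiAdj u v →
      ¬ G.StronglyComplete (I u) (I v) ∧ ¬ G.StronglyAnticomplete (I u) (I v))

/-- `G'` (with thickening map `I`) is an optimal antithickening of `G`: it is a laminar
antithickening with the maximum possible number of vertices. -/
def OptimalAntithickening (G : Trigraph V) (G' : Trigraph V') (I : V' → Set V) : Prop :=
  G.IsThickening G' I ∧ G'.Laminar ∧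
  ∀ (W : Type) (H : Trigraph W) (J : W → Set V),
    G.IsThickening H J → H.Laminar → Nat.card W ≤ Nat.card V'

/-- Isomorphism of trigraphs. -/
def Isomorphic (G1 : Trigraph V) (G2 : Trigraph V') : Prop :=
  ∃ f : V ≃ V', ∀ u v : V, G2.θ (f u) (f v) = G1.θ u v

end Trigraph

/-!
Suppose that no vertex outside a square-connected pair of a connected claw-free trigraph tells its
two sides apart. Then the pair is strongly complete to the rest of the trigraph, which makes the
trigraph degenerate. So in a connected non-degenerate trigraph the sides of such a pair are always
told apart by an outside vertex. It follows that two pairs with intersecting sides have a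
square-connected union, so "lying on a common side" is an equivalence relation; contracting its
classes gives a laminar trigraph `Q`. Conversely, a contraction never identifies vertices of
opposite sides, and if it is laminar then it collapses each side, since otherwise the images of the
sides would form a square-connected pair. So every laminar contraction factors through `Q`. Hence
`Q` has the largest possible number of vertices, and a laminar contraction with as many vertices
differs from `Q` by a bijection of the vertices, which is an isomorphism because a trigraph is
determined by the fibres of a contraction onto it.
-/

namespace Trigraph

variable {V W : Type} {G : Trigraph V} {H : Trigraph W} {p : V → W}
  {A B C D K K' S X Y : Set V} {a b c u v w x y : V}

theorem StrongAdj.symm (h : G.StrongAdj u v) : G.StrongAdj v u :=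
  (G.symm v u).trans h

instance : Std.Symm G.StrongAdj := ⟨fun _ _ => StrongAdj.symm⟩

theorem StrongAntiAdj.symm (h : G.StrongAntiAdj u v) : G.StrongAntiAdj v u :=
  (G.symm v u).trans h

theorem StrongAdj.ne (h : G.StrongAdj u v) : u ≠ v := by
  rintro rfl
  exact absurd ((G.refl_zero u).symm.trans h) (by decide)

theorem StrongAntiAdj.ne (h : G.StrongAntiAdj u v) : u ≠ v := by
  rintro rfl
  exact absurd ((G.refl_zero u).symm.trans h) (by decide)

theorem StrongAdj.not_strongAntiAdj (h : G.StrongAdj u v) : ¬ G.StrongAntiAdj u v :=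
  fun h' => by unfold StrongAdj at h; unfold StrongAntiAdj at h'; omega

theorem adj_iff : G.Adj u v ↔ u ≠ v ∧ ¬ G.StrongAntiAdj u v :=
  and_congr_right fun _ => by have := G.range_mem u v; unfold StrongAntiAdj; omega

theorem antiAdj_iff : G.AntiAdj u v ↔ u ≠ v ∧ ¬ G.StrongAdj u v :=
  and_congr_right fun _ => by have := G.range_mem u v; unfold StrongAdj; omega

theorem semiAdj_iff : G.SemiAdj u v ↔ u ≠ v ∧ ¬ G.StrongAdj u v ∧ ¬ G.StrongAntiAdj u v :=
  and_congr_right fun _ => by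
    have := G.range_mem u v; unfold StrongAdj StrongAntiAdj; omega

theorem StrongAdj.adj (h : G.StrongAdj u v) : G.Adj u v := ⟨h.ne, .inl h⟩

theorem StrongAntiAdj.antiAdj (h : G.StrongAntiAdj u v) : G.AntiAdj u v := ⟨h.ne, .inr h⟩

theorem Adj.symm (h : G.Adj u v) : G.Adj v u := ⟨h.1.symm, G.symm u v ▸ h.2⟩

theorem AntiAdj.symm (h : G.AntiAdj u v) : G.AntiAdj v u := ⟨h.1.symm, G.symm u v ▸ h.2⟩

theorem SemiAdj.symm (h : G.SemiAdj u v) : G.SemiAdj v u := ⟨h.1.symm, G.symm u v ▸ h.2⟩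

theorem SemiAdj.eq (huv : G.SemiAdj u v) (huw : G.SemiAdj u w) : v = w := by
  by_contra hvw
  exact G.semi_matching u v w huv.1 huw.1 hvw huv.2 huw.2

theorem Adj.semiAdj (h : G.Adj u v) (h' : G.AntiAdj u v) : G.SemiAdj u v :=
  semiAdj_iff.2 ⟨h.1, (antiAdj_iff.1 h').2, (adj_iff.1 h).2⟩

theorem Adj.strongAdj (h : G.Adj u v) (hsemi : ¬ G.SemiAdj u v) : G.StrongAdj u v :=
  h.2.resolve_right fun h0 => hsemi ⟨h.1, h0⟩

theorem AntiAdj.strongAntiAdj (h : G.AntiAdj u v) (hsemi : ¬ G.SemiAdj u v) :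
    G.StrongAntiAdj u v :=
  h.2.resolve_left fun h0 => hsemi ⟨h.1, h0⟩

theorem SemiAdj.strongAdj_of_adj (huv : G.SemiAdj u v) (huw : G.Adj u w) (hvw : v ≠ w) :
    G.StrongAdj u w :=
  huw.strongAdj fun h => hvw (huv.eq h)

theorem IsStrongClique.not_antiAdj (hK : G.IsStrongClique K) (hu : u ∈ K) (hv : v ∈ K) :
    ¬ G.AntiAdj u v :=
  fun h => (antiAdj_iff.1 h).2 (hK hu hv h.1)

theorem IsStrongClique.mem_right_of_antiAdj (hA : G.IsStrongClique A) (ha : a ∈ A)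
    (hb : b ∈ A ∪ B) (h : G.AntiAdj a b) : b ∈ B :=
  hb.resolve_left fun hbA => hA.not_antiAdj ha hbA h

theorem IsStrongClique.exists_not_mem_union_of_antiAdj (hA : G.IsStrongClique A)
    (hB : G.IsStrongClique B) (hxy : G.AntiAdj x y) (hxz : G.AntiAdj x w)
    (hyz : G.AntiAdj y w) : x ∉ A ∪ B ∨ y ∉ A ∪ B ∨ w ∉ A ∪ B := by
  have hA₁ := fun h h' => hA.not_antiAdj h h' hxy
  have hA₂ := fun h h' => hA.not_antiAdj h h' hxz
  have hA₃ := fun h h' => hA.not_antiAdj h h' hyz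
  have hB₁ := fun h h' => hB.not_antiAdj h h' hxy
  have hB₂ := fun h h' => hB.not_antiAdj h h' hxz
  have hB₃ := fun h h' => hB.not_antiAdj h h' hyz
  simp only [Set.mem_union]
  tauto

/-- `v` does not distinguish the vertices of `X`: it is strongly complete or strongly
anticomplete to `X`. -/
def UniformOn (G : Trigraph V) (v : V) (X : Set V) : Prop :=
  (∀ x ∈ X, G.StrongAdj v x) ∨ (∀ x ∈ X, G.StrongAntiAdj v x)

theorem uniformOn_iff :
    G.UniformOn v X ↔ G.StronglyComplete {v} X ∨ G.StronglyAnticomplete {v} X := by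
  simp only [UniformOn, StronglyComplete, StronglyAnticomplete, Set.mem_singleton_iff, forall_eq]

theorem UniformOn.mono (h : G.UniformOn v Y) (hXY : X ⊆ Y) : G.UniformOn v X :=
  h.imp (fun h x hx => h x (hXY hx)) fun h x hx => h x (hXY hx)

theorem UniformOn.strongAdj (h : G.UniformOn v X) (hx : x ∈ X) (hvx : ¬ G.StrongAntiAdj v x)
    (hy : y ∈ X) : G.StrongAdj v y :=
  h.resolve_right (fun h => hvx (h x hx)) y hy

theorem UniformOn.strongAntiAdj (h : G.UniformOn v X) (hx : x ∈ X) (hvx : ¬ G.StrongAdj v x)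
    (hy : y ∈ X) : G.StrongAntiAdj v y :=
  h.resolve_left (fun h => hvx (h x hx)) y hy

theorem UniformOn.not_semiAdj (h : G.UniformOn v X) (hx : x ∈ X) : ¬ G.SemiAdj v x := fun hvx =>
  have hvx := semiAdj_iff.1 hvx
  hvx.2.1 (h.strongAdj hx hvx.2.2 hx)

theorem UniformOn.union (hX : G.UniformOn v X) (hY : G.UniformOn v Y)
    (hxy : G.UniformOn v {x, y}) (hx : x ∈ X) (hy : y ∈ Y) : G.UniformOn v (X ∪ Y) := by
  rcases hxy with hxy | hxy
  · refine .inl fun z hz => hz.elim (hX.strongAdj hx ?_) (hY.strongAdj hy ?_)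
    exacts [(hxy x (by simp)).not_strongAntiAdj, (hxy y (by simp)).not_strongAntiAdj]
  · refine .inr fun z hz => hz.elim (hX.strongAntiAdj hx ?_) (hY.strongAntiAdj hy ?_)
    exacts [fun h => h.not_strongAntiAdj (hxy x (by simp)),
      fun h => h.not_strongAntiAdj (hxy y (by simp))]

theorem uniformOn_pair (hx : G.StrongAdj v x) (hy : G.StrongAdj v y) : G.UniformOn v {x, y} := by
  left
  rintro z (rfl | rfl)
  exacts [hx, hy]

/-! ### Square-connected pairs -/

theorem IsSquare.rotate (h : G.IsSquare u v w x) : G.IsSquare v w x u :=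
  let ⟨huw, hvx, huv, hvw, hwx, hxu⟩ := h
  ⟨hvx, huw.symm, hvw, hwx, hxu, huv⟩

theorem IsSquare.reflect (h : G.IsSquare u v w x) : G.IsSquare u x w v :=
  let ⟨huw, hvx, huv, hvw, hwx, hxu⟩ := h
  ⟨huw, hvx.symm, hxu.symm, hwx.symm, hvw.symm, huv.symm⟩

theorem IsSquare.exists_of_mem (h : G.IsSquare u v w x) (hy : y ∈ ({u, v, w, x} : Set V)) :
    ∃ v' w' x', G.IsSquare y v' w' x' ∧ ({y, v', w', x'} : Set V) = {u, v, w, x} := by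
  rcases hy with rfl | rfl | rfl | rfl
  · exact ⟨v, w, x, h, rfl⟩
  · exact ⟨w, x, u, h.rotate, by grind⟩
  · exact ⟨x, u, v, h.rotate.rotate, by grind⟩
  · exact ⟨u, v, w, h.rotate.rotate.rotate, by grind⟩

theorem SquareMeets.exists_isSquare {A' A'' : Set V} (hA : G.IsStrongClique A)
    (hA' : A' ⊆ A) (hA'' : A'' ⊆ A) (hdisj : Disjoint A' A'')
    (h : G.SquareMeets (A ∪ B) A' A'') :
    ∃ a₁ ∈ A', ∃ a₂ ∈ A'', ∃ b₁ ∈ B, ∃ b₂ ∈ B, G.IsSquare a₁ a₂ b₂ b₁ := by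
  obtain ⟨v₁, v₂, v₃, v₄, hsq, hsub, ⟨x, hx, hxA'⟩, ⟨y, hy, hyA''⟩⟩ := h
  obtain ⟨u, v, w, hsq, heq⟩ := hsq.exists_of_mem hx
  rw [← heq] at hsub hy
  have hxA := hA' hxA'
  have hyA := hA'' hyA''
  have hvB := hA.mem_right_of_antiAdj hxA (hsub (by simp)) hsq.1
  rcases hy with rfl | rfl | rfl | rfl
  · exact (Set.disjoint_left.1 hdisj hxA' hyA'').elim
  · have hwB := hA.mem_right_of_antiAdj hyA (hsub (by simp)) hsq.2.1
    exact ⟨x, hxA', y, hyA'', w, hwB, v, hvB, hsq⟩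
  · exact (hA.not_antiAdj hxA hyA hsq.1).elim
  · have huB := hA.mem_right_of_antiAdj hyA (hsub (by simp)) hsq.2.1.symm
    exact ⟨x, hxA', y, hyA'', u, huB, v, hvB, hsq.reflect⟩

/-- Every partition of `A` into two nonempty parts is crossed by a square with two further
vertices in `B`. For strong cliques this is the condition on `A` in `SquareConnected`; a partition
is encoded by an arbitrary set `S`, its parts being `A ∩ S` and `A \ S`. -/
def SquareLinked (G : Trigraph V) (A B : Set V) : Prop :=
  ∀ S : Set V, (A ∩ S).Nonempty → (A \ S).Nonempty →
    ∃ a₁ ∈ A ∩ S, ∃ a₂ ∈ A \ S, ∃ b₁ ∈ B, ∃ b₂ ∈ B, G.IsSquare a₁ a₂ b₂ b₁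

theorem squareLinked_iff (hA : G.IsStrongClique A) :
    G.SquareLinked A B ↔ ∀ A' A'' : Set V, A'.Nonempty → A''.Nonempty → A' ∪ A'' = A →
      Disjoint A' A'' → G.SquareMeets (A ∪ B) A' A'' := by
  constructor
  · rintro h A' A'' hA' hA'' rfl hdisj
    obtain ⟨a₁, ⟨-, ha₁⟩, a₂, ha₂, b₁, hb₁, b₂, hb₂, hsq⟩ := h A'
      (by rwa [Set.union_inter_cancel_left])
      (hA''.mono fun x hx => ⟨.inr hx, Set.disjoint_right.1 hdisj hx⟩)
    replace ha₂ := ha₂.1.resolve_left ha₂.2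
    refine ⟨a₁, a₂, b₂, b₁, hsq, ?_, ⟨a₁, by simp, ha₁⟩, ⟨a₂, by simp, ha₂⟩⟩
    rintro x (rfl | rfl | rfl | rfl)
    exacts [.inl (.inl ha₁), .inl (.inr ha₂), .inr hb₂, .inr hb₁]
  · intro h S hS hS'
    exact (h (A ∩ S) (A \ S) hS hS' (Set.inter_union_sdiff A S)
      Set.disjoint_sdiff_inter.symm).exists_isSquare hA Set.inter_subset_left Set.sdiff_subset
      Set.disjoint_sdiff_inter.symm

theorem SquareLinked.nontrivial_right (h : G.SquareLinked A B) (hA : A.Nontrivial) :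
    B.Nontrivial := by
  obtain ⟨a, ha, a', ha', hne⟩ := hA
  obtain ⟨_, _, _, _, b₁, hb₁, b₂, hb₂, hsq⟩ := h {a} ⟨a, ha, rfl⟩ ⟨a', ha', hne.symm⟩
  exact ⟨b₂, hb₂, b₁, hb₁, hsq.2.2.2.2.1.1⟩

/-- The conditions on the side `A` of a square-connected pair `(A, B)`, so that constructions of
such pairs can be carried out one side at a time. -/
structure SquareSide (G : Trigraph V) (A B : Set V) : Prop where
  nontrivial : A.Nontrivial
  isStrongClique : G.IsStrongClique A
  uniformOn : ∀ v ∉ A ∪ B, G.UniformOn v A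
  squareLinked : G.SquareLinked A B

theorem squareConnected_iff :
    G.SquareConnected A B ↔ Disjoint A B ∧ G.SquareSide A B ∧ G.SquareSide B A := by
  constructor
  · rintro ⟨⟨hAne, hBne, hdisj, hA, hB, hsing, hout⟩, hlA, hlB⟩
    rw [← squareLinked_iff hA] at hlA
    rw [Set.union_comm, ← squareLinked_iff hB] at hlB
    have hnontriv : A.Nontrivial ∧ B.Nontrivial := by
      by_cases hAn : A.Nontrivial
      · exact ⟨hAn, hlA.nontrivial_right hAn⟩
      by_cases hBn : B.Nontrivial
      · exact ⟨hlB.nontrivial_right hBn, hBn⟩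
      rw [Set.not_nontrivial_iff] at hAn hBn
      obtain ⟨a, rfl⟩ := Set.exists_eq_singleton_iff_nonempty_subsingleton.2 ⟨hAne, hAn⟩
      obtain ⟨b, rfl⟩ := Set.exists_eq_singleton_iff_nonempty_subsingleton.2 ⟨hBne, hBn⟩
      exact (hsing ⟨a, b, rfl, rfl⟩).elim
    refine ⟨hdisj, ⟨hnontriv.1, hA, fun v hv => uniformOn_iff.2 (hout v hv).1, hlA⟩,
      ⟨hnontriv.2, hB, fun v hv => uniformOn_iff.2 (hout v ?_).2, hlB⟩⟩
    rwa [Set.union_comm]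
  · rintro ⟨hdisj, hA, hB⟩
    refine ⟨⟨hA.nontrivial.nonempty, hB.nontrivial.nonempty, hdisj, hA.isStrongClique,
      hB.isStrongClique, ?_, fun v hv => ⟨uniformOn_iff.1 (hA.uniformOn v hv),
        uniformOn_iff.1 (hB.uniformOn v (by rwa [Set.union_comm]))⟩⟩,
      (squareLinked_iff hA.isStrongClique).1 hA.squareLinked, ?_⟩
    · rintro ⟨a, b, rfl, rfl⟩
      exact Set.not_nontrivial_singleton hA.nontrivial
    · rw [Set.union_comm]
      exact (squareLinked_iff hB.isStrongClique).1 hB.squareLinked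

theorem SquareConnected.disjoint (h : G.SquareConnected A B) : Disjoint A B :=
  h.1.2.2.1

theorem SquareConnected.left (h : G.SquareConnected A B) : G.SquareSide A B :=
  (squareConnected_iff.1 h).2.1

theorem SquareConnected.right (h : G.SquareConnected A B) : G.SquareSide B A :=
  (squareConnected_iff.1 h).2.2

theorem SquareConnected.symm (h : G.SquareConnected A B) : G.SquareConnected B A :=
  squareConnected_iff.2 ⟨h.disjoint.symm, h.right, h.left⟩

theorem SquareSide.exists_antiAdj (h : G.SquareSide A B) (ha : a ∈ A) :
    ∃ b ∈ B, G.AntiAdj a b := by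
  obtain ⟨a', ha', hne⟩ := h.nontrivial.exists_ne a
  obtain ⟨_, ⟨_, rfl⟩, _, _, _, _, b, hb, hsq⟩ := h.squareLinked {a} ⟨a, ha, rfl⟩ ⟨a', ha', hne⟩
  exact ⟨b, hb, hsq.1⟩

theorem SquareSide.exists_adj (h : G.SquareSide A B) (ha : a ∈ A) : ∃ b ∈ B, G.Adj a b := by
  obtain ⟨a', ha', hne⟩ := h.nontrivial.exists_ne a
  obtain ⟨_, ⟨_, rfl⟩, _, _, b, hb, _, _, hsq⟩ := h.squareLinked {a} ⟨a, ha, rfl⟩ ⟨a', ha', hne⟩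
  exact ⟨b, hb, hsq.2.2.2.2.2.symm⟩

theorem SquareSide.not_uniformOn (h : G.SquareSide A B) (ha : a ∈ A) : ¬ G.UniformOn a B := by
  obtain ⟨b₁, hb₁, hab₁⟩ := h.exists_adj ha
  obtain ⟨b₂, hb₂, hab₂⟩ := h.exists_antiAdj ha
  exact fun hu => (antiAdj_iff.1 hab₂).2 (hu.strongAdj hb₁ (adj_iff.1 hab₁).2 hb₂)

theorem SquareSide.mem_of_semiAdj (h : G.SquareSide A B) (ha : a ∈ A) (hab : G.SemiAdj a b) :
    b ∈ B := by
  by_contra hbB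
  by_cases hbA : b ∈ A
  · exact (semiAdj_iff.1 hab).2.1 (h.isStrongClique ha hbA hab.1)
  · exact (h.uniformOn b (by simp [hbA, hbB])).not_semiAdj ha hab.symm

/-! ### Separating the sides of a square-connected pair -/

/-- The two sides of every square-connected pair are distinguished by an outside vertex, i.e. the
union of the pair is neither the whole vertex set nor a homogeneous set. Connected non-degenerate
trigraphs have this property, and the uniqueness of the canonical quotient depends only on it. -/
def SidesSeparated (G : Trigraph V) : Prop :=
  ∀ A B : Set V, G.SquareConnected A B → ∃ v ∉ A ∪ B, ¬ G.UniformOn v (A ∪ B)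

theorem QuasiLine.clawFree (h : G.QuasiLine) : G.ClawFree := by
  rintro ⟨v, a, b, c, ha, hb, hc, hab, hac, hbc⟩
  obtain ⟨K₁, K₂, hK₁, hK₂, hv⟩ := h v
  have hmem : ∀ u, G.Adj v u → u ∈ K₁ ∪ K₂ := fun u hu => hv ▸ hu
  obtain h | h | h := hK₁.exists_not_mem_union_of_antiAdj hK₂ hab hac hbc
  exacts [h (hmem a ha), h (hmem b hb), h (hmem c hc)]

theorem NonDegenerate.clawFree (h : G.NonDegenerate) : G.ClawFree :=
  h.elim (fun h => h.1.clawFree) And.left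

theorem Connected.strongAdj_of_uniformOn (hconn : G.Connected) (hclaw : G.ClawFree)
    (hX : ∀ v ∉ X, G.UniformOn v X) (ha : a ∈ X) (hb : b ∈ X) (hab : G.AntiAdj a b)
    (hv : v ∉ X) (hx : x ∈ X) : G.StrongAdj v x := by
  induction hconn a v generalizing x with
  | refl => exact (hv ha).elim
  | @tail u w _ huw ih =>
    by_cases hu : u ∈ X
    · exact (hX w hv).strongAdj hu (adj_iff.1 huw.symm).2 hx
    by_contra hwx
    have hanti : ∀ y ∈ X, G.AntiAdj y w := fun y hy =>
      ((hX w hv).strongAntiAdj hx hwx hy).antiAdj.symm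
    exact hclaw ⟨u, a, b, w, (ih hu ha).adj, (ih hu hb).adj, huw, hab, hanti a ha, hanti b hb⟩

theorem QuasiLine.cobipartite_of_strongAdj (h : G.QuasiLine) (hA : G.IsStrongClique A)
    (hB : G.IsStrongClique B) (ha : a ∈ A)
    (hout : ∀ v ∉ A ∪ B, ∀ x ∈ A ∪ B, G.StrongAdj v x) : G.Cobipartite := by
  obtain ⟨K₁, K₂, hK₁, hK₂, hN⟩ := h a
  have hclique : ∀ {X K}, G.IsStrongClique X → X ⊆ A ∪ B → G.IsStrongClique K →
      G.IsStrongClique (X ∪ K \ (A ∪ B)) := fun hX hXAB hK =>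
    Set.pairwise_union_of_symm.2 ⟨hX, hK.mono Set.sdiff_subset, fun x hx v hv _ =>
      (hout v hv.2 x (hXAB hx)).symm⟩
  refine ⟨_, _, hclique hA Set.subset_union_left hK₁, hclique hB Set.subset_union_right hK₂,
    Set.eq_univ_of_forall fun v => ?_⟩
  by_cases hv : v ∈ A ∪ B
  · exact hv.imp .inl .inl
  have hvN : v ∈ K₁ ∪ K₂ := hN ▸ (hout v hv a (.inl ha)).symm.adj
  exact hvN.imp (fun h => .inr ⟨h, hv⟩) fun h => .inr ⟨h, hv⟩

theorem ClawFree.ncard_lt_three_of_strongAdj (h : G.ClawFree) (hA : G.IsStrongClique A)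
    (hB : G.IsStrongClique B) (ha : a ∈ A) (hout : ∀ v ∉ A ∪ B, ∀ x ∈ A ∪ B, G.StrongAdj v x)
    (hS : G.IsStableSet S) : S.ncard < 3 := by
  by_contra! hcard
  obtain ⟨x, y, z, hx, hy, hz, hxy, hxz, hyz⟩ :=
    (Set.two_lt_ncard_iff (Set.finite_of_ncard_pos (by omega))).1 hcard
  have hout' : ∀ {u v}, u ∈ S → v ∈ S → u ∉ A ∪ B → v ∉ A ∪ B := fun {u v} hu hv huAB hvAB => by
    have huv : u ≠ v := fun e => huAB (e ▸ hvAB)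
    exact (antiAdj_iff.1 (hS hu hv huv)).2 (hout u huAB v hvAB)
  have hnone : x ∉ A ∪ B ∧ y ∉ A ∪ B ∧ z ∉ A ∪ B := by
    rcases hA.exists_not_mem_union_of_antiAdj hB (hS hx hy hxy) (hS hx hz hxz) (hS hy hz hyz)
      with hn | hn | hn
    exacts [⟨hn, hout' hx hy hn, hout' hx hz hn⟩, ⟨hout' hy hx hn, hn, hout' hy hz hn⟩,
      ⟨hout' hz hx hn, hout' hz hy hn, hn⟩]
  have hadj : ∀ v ∉ A ∪ B, G.Adj a v := fun v hv => (hout v hv a (.inl ha)).symm.adj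
  exact h ⟨a, x, y, z, hadj x hnone.1, hadj y hnone.2.1, hadj z hnone.2.2,
    hS hx hy hxy, hS hx hz hxz, hS hy hz hyz⟩

theorem Connected.sidesSeparated (hconn : G.Connected) (hnd : G.NonDegenerate) :
    G.SidesSeparated := by
  intro A B hAB
  by_contra! hunif
  obtain ⟨a, ha⟩ := hAB.left.nontrivial.nonempty
  obtain ⟨b, hb, hab⟩ := hAB.left.exists_antiAdj ha
  have hA := hAB.left.isStrongClique
  have hB := hAB.right.isStrongClique
  have hout : ∀ v ∉ A ∪ B, ∀ x ∈ A ∪ B, G.StrongAdj v x := fun v hv x hx =>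
    hconn.strongAdj_of_uniformOn hnd.clawFree hunif (.inl ha) (.inr hb) hab hv hx
  rcases hnd with ⟨hql, hcobip⟩ | ⟨hclaw, S, hS, hcard⟩
  · exact hcobip (hql.cobipartite_of_strongAdj hA hB ha hout)
  · exact hcard.not_gt (hclaw.ncard_lt_three_of_strongAdj hA hB ha hout hS)

theorem SquareConnected.exists_mem_of_meets (hCD : G.SquareConnected C D)
    (hK : G.IsStrongClique K) (hout : ∀ v ∉ K ∪ K', G.UniformOn v K)
    (haC : a ∈ C) (haK : a ∈ K) (hbD : b ∈ D) (hbK : b ∈ K) : ∃ d ∈ D, d ∈ K' := by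
  obtain ⟨d, hdD, had⟩ := hCD.left.exists_antiAdj haC
  have hdK : d ∉ K := fun hd => hK.not_antiAdj haK hd had
  refine ⟨d, hdD, by_contra fun hdK' => ?_⟩
  have hdb := (hout d (by simp [hdK, hdK'])).strongAntiAdj haK (antiAdj_iff.1 had.symm).2 hbK
  exact hCD.right.isStrongClique.not_antiAdj hdD hbD hdb.antiAdj

/-- If `K` contained `b`, then `K'` would meet both sides of the pair as well, and no outside vertex
could tell the sides apart. -/
theorem SquareConnected.not_mem_of_mem (hG : G.SidesSeparated) (hCD : G.SquareConnected C D)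
    (hK : G.IsStrongClique K) (hK' : G.IsStrongClique K') (hout : ∀ v ∉ K ∪ K', G.UniformOn v K)
    (haC : a ∈ C) (haK : a ∈ K) (hbD : b ∈ D) : b ∉ K := by
  intro hbK
  obtain ⟨d, hdD, hdK'⟩ := hCD.exists_mem_of_meets hK hout haC haK hbD hbK
  obtain ⟨c, hcC, hcK'⟩ := hCD.symm.exists_mem_of_meets hK hout hbD hbK haC haK
  obtain ⟨v, hv, hvCD⟩ := hG C D hCD
  have hvC := hCD.left.uniformOn v hv
  have hvD := hCD.right.uniformOn v (by rwa [Set.union_comm])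
  have hne : ∀ x ∈ C ∪ D, v ≠ x := fun x hx e => hv (e ▸ hx)
  by_cases hvK' : v ∈ K'
  · exact hvCD (hvC.union hvD (uniformOn_pair (hK' hvK' hcK' (hne c (.inl hcC)))
      (hK' hvK' hdK' (hne d (.inr hdD)))) hcC hdD)
  refine hvCD (hvC.union hvD ?_ haC hbD)
  by_cases hvK : v ∈ K
  · exact uniformOn_pair (hK hvK haK (hne a (.inl haC))) (hK hvK hbK (hne b (.inr hbD)))
  · exact (hout v (by simp [hvK, hvK'])).mono (by simp [Set.insert_subset_iff, haK, hbK])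

/-! ### Unions of overlapping square-connected pairs -/

theorem SquareConnected.disjoint_of_mem (hG : G.SidesSeparated) (hAB : G.SquareConnected A B)
    (hCD : G.SquareConnected C D) (hxA : x ∈ A) (hxC : x ∈ C) : Disjoint A D :=
  Set.disjoint_right.2 fun _ hd => hCD.not_mem_of_mem hG hAB.left.isStrongClique
    hAB.right.isStrongClique hAB.left.uniformOn hxC hxA hd

theorem SquareConnected.inter_nonempty (hAB : G.SquareConnected A B)
    (hCD : G.SquareConnected C D) (hAD : Disjoint A D) (hCB : Disjoint C B)
    (hxA : x ∈ A) (hxC : x ∈ C) : (B ∩ D).Nonempty := by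
  rw [Set.nonempty_iff_ne_empty, ne_eq, ← Set.disjoint_iff_inter_eq_empty]
  intro hBD
  have hCA : C ⊆ A := fun c hcC => by
    by_contra hcA
    have hcB := hAB.right.uniformOn c (by simp [hcA, Set.disjoint_left.1 hCB hcC])
    have hBC : ∀ b ∈ B, G.UniformOn b C := fun b hb => hCD.left.uniformOn b
      (by simp [Set.disjoint_left.1 hBD hb, Set.disjoint_right.1 hCB hb])
    refine hAB.left.not_uniformOn hxA (hcB.imp (fun h b hb => ?_) fun h b hb => ?_)
    · exact ((hBC b hb).strongAdj hcC (h b hb).symm.not_strongAntiAdj hxC).symm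
    · exact ((hBC b hb).strongAntiAdj hcC (fun hbc => hbc.not_strongAntiAdj (h b hb).symm)
        hxC).symm
  obtain ⟨d, hd⟩ := hCD.right.nontrivial.nonempty
  refine hCD.right.not_uniformOn hd ((hAB.left.uniformOn d ?_).mono hCA)
  simp [Set.disjoint_right.1 hAD hd, Set.disjoint_right.1 hBD hd]

theorem SquareLinked.mono {A' B' : Set V} (h : G.SquareLinked A' B') (hA : A' ⊆ A) (hB : B' ⊆ B)
    (hS : (A' ∩ S).Nonempty) (hS' : (A' \ S).Nonempty) :
    ∃ a₁ ∈ A ∩ S, ∃ a₂ ∈ A \ S, ∃ b₁ ∈ B, ∃ b₂ ∈ B, G.IsSquare a₁ a₂ b₂ b₁ := by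
  obtain ⟨a₁, ha₁, a₂, ha₂, b₁, hb₁, b₂, hb₂, hsq⟩ := h S hS hS'
  exact ⟨a₁, ⟨hA ha₁.1, ha₁.2⟩, a₂, ⟨hA ha₂.1, ha₂.2⟩, b₁, hB hb₁, b₂, hB hb₂, hsq⟩

theorem SquareLinked.union (hA : G.SquareLinked A B) (hC : G.SquareLinked C D) (hxA : x ∈ A)
    (hxC : x ∈ C) : G.SquareLinked (A ∪ C) (B ∪ D) := by
  intro S ⟨y, hy, hyS⟩ ⟨z, hz, hzS⟩
  have hA := fun hS hS' => hA.mono (S := S) (Set.subset_union_left (t := C))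
    (Set.subset_union_left (t := D)) hS hS'
  have hC := fun hS hS' => hC.mono (S := S) (Set.subset_union_right (s := A))
    (Set.subset_union_right (s := B)) hS hS'
  by_cases hxS : x ∈ S
  · exact hz.elim (fun hz => hA ⟨x, hxA, hxS⟩ ⟨z, hz, hzS⟩) fun hz => hC ⟨x, hxC, hxS⟩ ⟨z, hz, hzS⟩
  · exact hy.elim (fun hy => hA ⟨y, hy, hyS⟩ ⟨x, hxA, hxS⟩) fun hy => hC ⟨y, hy, hyS⟩ ⟨x, hxC, hxS⟩

theorem SquareSide.union (hA : G.SquareSide A B) (hC : G.SquareSide C D) (hAD : Disjoint A D)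
    (hxA : x ∈ A) (hxC : x ∈ C) : G.SquareSide (A ∪ C) (B ∪ D) where
  nontrivial := hA.nontrivial.mono Set.subset_union_left
  isStrongClique := by
    refine Set.pairwise_union_of_symm.2
      ⟨hA.isStrongClique, hC.isStrongClique, fun a ha c hc hac => ?_⟩
    by_cases haC : a ∈ C
    · exact hC.isStrongClique haC hc hac
    have haCD : a ∉ C ∪ D := by simp [haC, Set.disjoint_left.1 hAD ha]
    have hax := hA.isStrongClique ha hxA fun e => haC (e ▸ hxC)
    exact (hC.uniformOn a haCD).strongAdj hxC hax.not_strongAntiAdj hc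
  uniformOn v hv := by
    simp only [Set.mem_union, not_or] at hv
    have hvA := hA.uniformOn v (by simp [hv.1.1, hv.2.1])
    have hvC := hC.uniformOn v (by simp [hv.1.2, hv.2.2])
    exact hvA.union hvC (hvA.mono (by simpa using hxA)) hxA hxC
  squareLinked := hA.squareLinked.union hC.squareLinked hxA hxC

theorem SquareConnected.union (hG : G.SidesSeparated) (hAB : G.SquareConnected A B)
    (hCD : G.SquareConnected C D) (hxA : x ∈ A) (hxC : x ∈ C) :
    G.SquareConnected (A ∪ C) (B ∪ D) := by
  have hAD := hAB.disjoint_of_mem hG hCD hxA hxC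
  have hCB := hCD.disjoint_of_mem hG hAB hxC hxA
  obtain ⟨y, hyB, hyD⟩ := hAB.inter_nonempty hCD hAD hCB hxA hxC
  refine squareConnected_iff.2 ⟨?_, hAB.left.union hCD.left hAD hxA hxC,
    hAB.right.union hCD.right hCB.symm hyB hyD⟩
  simp only [Set.disjoint_union_left, Set.disjoint_union_right]
  exact ⟨⟨hAB.disjoint, hCB⟩, hAD, hCD.disjoint⟩

/-! ### Contractions -/

/-- `G` is a thickening of `H` whose parts are the fibres of `p : V → W`. Every thickening is of
this form, and the map `p` composes better than the indexed family of parts. -/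
def IsContraction (G : Trigraph V) (H : Trigraph W) (p : V → W) : Prop :=
  G.IsThickening H fun w => p ⁻¹' {w}

theorem IsThickening.exists_isContraction {I : W → Set V} (h : G.IsThickening H I) :
    ∃ p : V → W, G.IsContraction H p := by
  have hcover : ∀ x, ∃ w, x ∈ I w := fun x => Set.mem_iUnion.1 (h.2.2.1 ▸ Set.mem_univ x)
  choose p hp using hcover
  have hI : I = fun w => p ⁻¹' {w} := by
    funext w
    ext x
    refine ⟨fun hx => by_contra fun hne => ?_, fun hx => hx ▸ hp x⟩
    exact Set.disjoint_left.1 (h.2.1 _ _ hne) (hp x) hx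
  exact ⟨p, by rwa [IsContraction, ← hI]⟩

theorem IsContraction.surjective (hp : G.IsContraction H p) : Function.Surjective p :=
  fun w => (hp.1 w).1

theorem IsContraction.strongAdj_of_eq (hp : G.IsContraction H p) (hxy : p x = p y) (hne : x ≠ y) :
    G.StrongAdj x y :=
  (hp.1 (p y)).2 hxy rfl hne

theorem IsContraction.stronglyComplete_iff (hp : G.IsContraction H p) {u v : W} (huv : u ≠ v) :
    G.StronglyComplete (p ⁻¹' {u}) (p ⁻¹' {v}) ↔ H.StrongAdj u v := by
  refine ⟨fun h => by_contra fun hadj => ?_, (hp.2.2.2 u v huv).1⟩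
  by_cases hanti : H.StrongAntiAdj u v
  · obtain ⟨x, hx⟩ := hp.surjective u
    obtain ⟨y, hy⟩ := hp.surjective v
    exact (h x hx y hy).not_strongAntiAdj ((hp.2.2.2 u v huv).2.1 hanti x hx y hy)
  · exact ((hp.2.2.2 u v huv).2.2 (semiAdj_iff.2 ⟨huv, hadj, hanti⟩)).1 h

theorem IsContraction.stronglyAnticomplete_iff (hp : G.IsContraction H p) {u v : W}
    (huv : u ≠ v) : G.StronglyAnticomplete (p ⁻¹' {u}) (p ⁻¹' {v}) ↔ H.StrongAntiAdj u v := by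
  refine ⟨fun h => by_contra fun hanti => ?_, (hp.2.2.2 u v huv).2.1⟩
  by_cases hadj : H.StrongAdj u v
  · obtain ⟨x, hx⟩ := hp.surjective u
    obtain ⟨y, hy⟩ := hp.surjective v
    exact ((hp.2.2.2 u v huv).1 hadj x hx y hy).not_strongAntiAdj (h x hx y hy)
  · exact ((hp.2.2.2 u v huv).2.2 (semiAdj_iff.2 ⟨huv, hadj, hanti⟩)).2 h

theorem IsContraction.strongAdj (hp : G.IsContraction H p) (h : H.StrongAdj (p x) (p y)) :
    G.StrongAdj x y :=
  (hp.stronglyComplete_iff h.ne).2 h x rfl y rfl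

theorem IsContraction.strongAntiAdj (hp : G.IsContraction H p)
    (h : H.StrongAntiAdj (p x) (p y)) : G.StrongAntiAdj x y :=
  (hp.stronglyAnticomplete_iff h.ne).2 h x rfl y rfl

theorem IsContraction.map_adj (hp : G.IsContraction H p) (hne : p x ≠ p y) (h : G.Adj x y) :
    H.Adj (p x) (p y) :=
  adj_iff.2 ⟨hne, fun h' => (adj_iff.1 h).2 (hp.strongAntiAdj h')⟩

theorem IsContraction.map_antiAdj (hp : G.IsContraction H p) (hne : p x ≠ p y)
    (h : G.AntiAdj x y) : H.AntiAdj (p x) (p y) :=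
  antiAdj_iff.2 ⟨hne, fun h' => (antiAdj_iff.1 h).2 (hp.strongAdj h')⟩

theorem IsContraction.exists_adj (hp : G.IsContraction H p) {u v : W} (h : H.Adj u v) :
    ∃ x y, p x = u ∧ p y = v ∧ G.Adj x y := by
  have hfib := mt (hp.stronglyAnticomplete_iff h.1).1 (adj_iff.1 h).2
  unfold StronglyAnticomplete at hfib
  push Not at hfib
  obtain ⟨x, hx, y, hy, hxy⟩ := hfib
  exact ⟨x, y, hx, hy, adj_iff.2 ⟨fun e => h.1 (hx.symm.trans (e ▸ hy)), hxy⟩⟩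

theorem IsContraction.exists_antiAdj (hp : G.IsContraction H p) {u v : W} (h : H.AntiAdj u v) :
    ∃ x y, p x = u ∧ p y = v ∧ G.AntiAdj x y := by
  have hfib := mt (hp.stronglyComplete_iff h.1).1 (antiAdj_iff.1 h).2
  unfold StronglyComplete at hfib
  push Not at hfib
  obtain ⟨x, hx, y, hy, hxy⟩ := hfib
  exact ⟨x, y, hx, hy, antiAdj_iff.2 ⟨fun e => h.1 (hx.symm.trans (e ▸ hy)), hxy⟩⟩

theorem IsContraction.uniformOn_fibre (hp : G.IsContraction H p) {w : W} (hne : p v ≠ w)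
    (h : ¬ H.SemiAdj (p v) w) : G.UniformOn v (p ⁻¹' {w}) := by
  by_cases hadj : H.StrongAdj (p v) w
  · exact .inl ((hp.stronglyComplete_iff hne).2 hadj v rfl)
  · have hanti := by_contra fun hanti => h (semiAdj_iff.2 ⟨hne, hadj, hanti⟩)
    exact .inr ((hp.stronglyAnticomplete_iff hne).2 hanti v rfl)

theorem IsSquare.strongAdj_or_strongAntiAdj (h : G.IsSquare u v w x) :
    (G.StrongAdj v w ∧ G.StrongAdj x u) ∨ (G.StrongAntiAdj u w ∧ G.StrongAntiAdj v x) := by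
  obtain ⟨huw, hvx, huv, hvw, hwx, hxu⟩ := h
  by_cases hsemi : G.SemiAdj u w
  · exact .inl ⟨(hsemi.symm.strongAdj_of_adj hvw.symm huv.1).symm,
      (hsemi.strongAdj_of_adj hxu.symm hwx.1).symm⟩
  by_cases hsemi' : G.SemiAdj v x
  · exact .inl ⟨hsemi'.strongAdj_of_adj hvw hwx.1.symm,
      hsemi'.symm.strongAdj_of_adj hxu huv.1.symm⟩
  exact .inr ⟨huw.strongAntiAdj hsemi, hvx.strongAntiAdj hsemi'⟩

theorem IsContraction.exists_isSquare (hp : G.IsContraction H p) {u v w x : W}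
    (h : H.IsSquare u v w x) (huv : H.StrongAdj u v) (hwx : H.StrongAdj w x) :
    ∃ a b c d, p a = u ∧ p b = v ∧ p c = w ∧ p d = x ∧ G.IsSquare a b c d := by
  rcases h.strongAdj_or_strongAntiAdj with ⟨hvw, hxu⟩ | ⟨huw, hvx⟩
  · obtain ⟨a, c, rfl, rfl, hac⟩ := hp.exists_antiAdj h.1
    obtain ⟨b, d, rfl, rfl, hbd⟩ := hp.exists_antiAdj h.2.1
    exact ⟨a, b, c, d, rfl, rfl, rfl, rfl, hac, hbd, (hp.strongAdj huv).adj,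
      (hp.strongAdj hvw).adj, (hp.strongAdj hwx).adj, (hp.strongAdj hxu).adj⟩
  · obtain ⟨b, c, rfl, rfl, hbc⟩ := hp.exists_adj h.2.2.2.1
    obtain ⟨d, a, rfl, rfl, hda⟩ := hp.exists_adj h.2.2.2.2.2
    exact ⟨a, b, c, d, rfl, rfl, rfl, rfl, (hp.strongAntiAdj huw).antiAdj,
      (hp.strongAntiAdj hvx).antiAdj, (hp.strongAdj huv).adj, hbc, (hp.strongAdj hwx).adj, hda⟩

/-! ### Laminar contractions collapse the sides of square-connected pairs -/

theorem IsContraction.disjoint_image (hp : G.IsContraction H p) (hG : G.SidesSeparated)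
    (hAB : G.SquareConnected A B) : Disjoint (p '' A) (p '' B) := by
  rw [Set.disjoint_left]
  rintro _ ⟨a, ha, rfl⟩ ⟨b, hb, hab⟩
  have hsemi : G.IsStrongClique {y | H.SemiAdj (p a) (p y)} := fun y hy z hz hne =>
    hp.strongAdj_of_eq (hy.eq hz) hne
  refine hAB.not_mem_of_mem hG (hp.1 (p a)).2 hsemi (fun v hv => ?_) ha rfl hb hab
  simp only [Set.mem_union, not_or] at hv
  exact hp.uniformOn_fibre hv.1 fun h => hv.2 h.symm

theorem IsContraction.semiAdj (hp : G.IsContraction H p) (hA : G.SquareSide A B) (ha : a ∈ A)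
    {w : W} (hB : ∀ b ∈ B, p b = w) (hne : p a ≠ w) : H.SemiAdj (p a) w := by
  obtain ⟨b, hb, hab⟩ := hA.exists_adj ha
  obtain ⟨b', hb', hab'⟩ := hA.exists_antiAdj ha
  have hadj := hp.map_adj (hB b hb ▸ hne) hab
  have hanti := hp.map_antiAdj (hB b' hb' ▸ hne) hab'
  rw [hB b hb] at hadj
  rw [hB b' hb'] at hanti
  exact hadj.semiAdj hanti

theorem IsContraction.fibre_subset (hp : G.IsContraction H p) (hAB : G.SquareConnected A B)
    (hdisj : Disjoint (p '' A) (p '' B)) (ha : a ∈ A) (hsemi : ∀ b ∈ B, ¬ H.SemiAdj (p a) (p b)) :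
    p ⁻¹' {p a} ⊆ A := by
  intro z hz
  by_contra hzA
  have hne : ∀ b ∈ B, p b ≠ p a := fun b hb =>
    (hdisj.ne_of_mem (Set.mem_image_of_mem p ha) (Set.mem_image_of_mem p hb)).symm
  have hfib : ∀ b ∈ B, G.UniformOn b (p ⁻¹' {p a}) := fun b hb =>
    hp.uniformOn_fibre (hne b hb) fun h => hsemi b hb h.symm
  have hzB := hAB.right.uniformOn z (by simpa [hzA] using fun hzB => hne z hzB hz)
  refine hAB.left.not_uniformOn ha (hzB.imp (fun h b hb => ?_) fun h b hb => ?_)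
  · exact ((hfib b hb).strongAdj hz (h b hb).symm.not_strongAntiAdj rfl).symm
  · exact ((hfib b hb).strongAntiAdj hz (fun hbz => hbz.not_strongAntiAdj (h b hb).symm) rfl).symm

theorem IsContraction.isStrongClique_image (hp : G.IsContraction H p) (hAB : G.SquareConnected A B)
    (hdisj : Disjoint (p '' A) (p '' B)) : H.IsStrongClique (p '' A) := by
  rintro _ ⟨a, ha, rfl⟩ _ ⟨a', ha', rfl⟩ hne
  by_contra hadj
  have haa' := hAB.left.isStrongClique ha ha' fun e => hne (e ▸ rfl)
  have hsemi := semiAdj_iff.2 ⟨hne, hadj, (adj_iff.1 (hp.map_adj hne haa'.adj)).2⟩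
  have hdisj' : ∀ x ∈ A, ∀ b ∈ B, p x ≠ p b := fun x hx b hb =>
    hdisj.ne_of_mem (Set.mem_image_of_mem p hx) (Set.mem_image_of_mem p hb)
  have hfib := hp.fibre_subset hAB hdisj ha fun b hb h => hdisj' a' ha' b hb (hsemi.eq h)
  have hfib' := hp.fibre_subset hAB hdisj ha' fun b hb h => hdisj' a ha b hb (hsemi.symm.eq h)
  refine hadj ((hp.stronglyComplete_iff hne).1 fun x hx y hy => ?_)
  exact hAB.left.isStrongClique (hfib hx) (hfib' hy) fun e => hne (hx.symm.trans (e ▸ hy))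

theorem IsContraction.not_semiAdj_image (hp : G.IsContraction H p) (hAB : G.SquareConnected A B)
    (hdisj : Disjoint (p '' A) (p '' B)) (hA : (p '' A).Nontrivial) {w : W}
    (hw : w ∉ p '' A ∪ p '' B) (ha : a ∈ A) : ¬ H.SemiAdj w (p a) := by
  intro hsemi
  have hwB : ∀ b ∈ B, w ≠ p b := fun b hb e => hw (.inr ⟨b, hb, e.symm⟩)
  have hfib := hp.fibre_subset hAB hdisj ha fun b hb h => hwB b hb (hsemi.symm.eq h)
  have hout : ∀ z, p z = w → G.UniformOn z A := fun z hz =>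
    hAB.left.uniformOn z fun h => hw (hz ▸ h.imp (Set.mem_image_of_mem p) (Set.mem_image_of_mem p))
  obtain ⟨_, ⟨a', ha', rfl⟩, hne⟩ := hA.exists_ne (p a)
  have hwa' : w ≠ p a' := fun e => hw (.inl ⟨a', ha', e.symm⟩)
  have hsemi' : ¬ H.SemiAdj w (p a') := fun h => hne (h.eq hsemi)
  have hmixed := semiAdj_iff.1 hsemi
  by_cases hadj : H.StrongAdj w (p a')
  · refine hmixed.2.1 ((hp.stronglyComplete_iff hsemi.1).1 fun z hz y hy => ?_)
    exact (hout z hz).strongAdj ha' (hp.strongAdj (hz ▸ hadj)).not_strongAntiAdj (hfib hy)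
  · have hanti := by_contra fun hanti => hsemi' (semiAdj_iff.2 ⟨hwa', hadj, hanti⟩)
    refine hmixed.2.2 ((hp.stronglyAnticomplete_iff hsemi.1).1 fun z hz y hy => ?_)
    exact (hout z hz).strongAntiAdj ha'
      (fun h => h.not_strongAntiAdj (hp.strongAntiAdj (hz ▸ hanti))) (hfib hy)

theorem IsContraction.uniformOn_image (hp : G.IsContraction H p) (hAB : G.SquareConnected A B)
    (hdisj : Disjoint (p '' A) (p '' B)) (hA : (p '' A).Nontrivial) {w : W}
    (hw : w ∉ p '' A ∪ p '' B) : H.UniformOn w (p '' A) := by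
  obtain ⟨z, rfl⟩ := hp.surjective w
  have hzA : z ∉ A ∪ B := fun h =>
    hw (h.imp (Set.mem_image_of_mem p) (Set.mem_image_of_mem p))
  have hsemi : ∀ a ∈ A, ¬ H.SemiAdj (p z) (p a) := fun a ha =>
    hp.not_semiAdj_image hAB hdisj hA hw ha
  have hne : ∀ a ∈ A, p z ≠ p a := fun a ha e => hw (.inl ⟨a, ha, e.symm⟩)
  refine (hAB.left.uniformOn z hzA).imp (fun h => ?_) fun h => ?_ <;> rintro _ ⟨a, ha, rfl⟩
  · exact (hp.map_adj (hne a ha) (h a ha).adj).strongAdj (hsemi a ha)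
  · exact (hp.map_antiAdj (hne a ha) (h a ha).antiAdj).strongAntiAdj (hsemi a ha)

theorem IsContraction.isSquare_map (hp : G.IsContraction H p) (hdisj : Disjoint (p '' A) (p '' B))
    {a₁ a₂ b₁ b₂ : V} (ha₁ : a₁ ∈ A) (ha₂ : a₂ ∈ A) (hb₁ : b₁ ∈ B) (hb₂ : b₂ ∈ B)
    (hsq : G.IsSquare a₁ a₂ b₂ b₁) (ha : p a₁ ≠ p a₂) :
    H.IsSquare (p a₁) (p a₂) (p b₂) (p b₁) := by
  obtain ⟨h₁₂, h₂₁, ha₁₂, h₂₂, hb₂₁, h₁₁⟩ := hsq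
  have hne : ∀ {x y}, x ∈ A → y ∈ B → p x ≠ p y := fun hx hy =>
    hdisj.ne_of_mem (Set.mem_image_of_mem p hx) (Set.mem_image_of_mem p hy)
  have h₁₂ := hp.map_antiAdj (hne ha₁ hb₂) h₁₂
  have h₂₁ := hp.map_antiAdj (hne ha₂ hb₁) h₂₁
  have h₂₂ := hp.map_adj (hne ha₂ hb₂) h₂₂
  have h₁₁ := hp.map_adj (hne ha₁ hb₁).symm h₁₁
  refine ⟨h₁₂, h₂₁, hp.map_adj ha ha₁₂, h₂₂, hp.map_adj (fun hb => ha ?_) hb₂₁, h₁₁⟩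
  rw [hb] at h₁₂ h₂₂
  exact (h₁₁.semiAdj h₁₂.symm).eq (h₂₂.semiAdj h₂₁).symm

theorem IsContraction.squareLinked_image (hp : G.IsContraction H p)
    (hdisj : Disjoint (p '' A) (p '' B)) (hlink : G.SquareLinked A B) :
    H.SquareLinked (p '' A) (p '' B) := by
  rintro S ⟨_, ⟨x, hx, rfl⟩, hxS⟩ ⟨_, ⟨y, hy, rfl⟩, hyS⟩
  obtain ⟨a₁, ha₁, a₂, ha₂, b₁, hb₁, b₂, hb₂, hsq⟩ := hlink (p ⁻¹' S) ⟨x, hx, hxS⟩ ⟨y, hy, hyS⟩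
  exact ⟨p a₁, ⟨⟨a₁, ha₁.1, rfl⟩, ha₁.2⟩, p a₂, ⟨⟨a₂, ha₂.1, rfl⟩, ha₂.2⟩, p b₁, ⟨b₁, hb₁, rfl⟩,
    p b₂, ⟨b₂, hb₂, rfl⟩, hp.isSquare_map hdisj ha₁.1 ha₂.1 hb₁ hb₂ hsq
      fun e => ha₂.2 (e ▸ ha₁.2 : p a₂ ∈ S)⟩

theorem IsContraction.squareSide_image (hp : G.IsContraction H p) (hAB : G.SquareConnected A B)
    (hdisj : Disjoint (p '' A) (p '' B)) (hA : (p '' A).Nontrivial) :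
    H.SquareSide (p '' A) (p '' B) where
  nontrivial := hA
  isStrongClique := hp.isStrongClique_image hAB hdisj
  uniformOn _ hw := hp.uniformOn_image hAB hdisj hA hw
  squareLinked := hp.squareLinked_image hdisj hAB.left.squareLinked

theorem IsContraction.subsingleton_image (hp : G.IsContraction H p) (hG : G.SidesSeparated)
    (hH : H.Laminar) (hAB : G.SquareConnected A B) : (p '' A).Subsingleton := by
  rw [← Set.not_nontrivial_iff]
  intro hA
  have hdisj := hp.disjoint_image hG hAB
  have hA := hp.squareSide_image hAB hdisj hA
  have hB := hp.squareSide_image hAB.symm hdisj.symm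
    (hA.squareLinked.nontrivial_right hA.nontrivial)
  exact hH ⟨_, _, squareConnected_iff.2 ⟨hdisj, hA, hB⟩⟩

/-! ### The canonical quotient -/

/-- The fibres of `p` over `u` and `v` are neither strongly complete nor strongly anticomplete to
each other, so `u` and `v` have to be semiadjacent in any trigraph contracting `G` along `p`. -/
def MixedFibres (G : Trigraph V) (p : V → W) (u v : W) : Prop :=
  u ≠ v ∧ ¬ G.StronglyComplete (p ⁻¹' {u}) (p ⁻¹' {v}) ∧
    ¬ G.StronglyAnticomplete (p ⁻¹' {u}) (p ⁻¹' {v})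

theorem stronglyComplete_comm : G.StronglyComplete X Y ↔ G.StronglyComplete Y X :=
  ⟨fun h y hy x hx => (h x hx y hy).symm, fun h x hx y hy => (h y hy x hx).symm⟩

theorem stronglyAnticomplete_comm : G.StronglyAnticomplete X Y ↔ G.StronglyAnticomplete Y X :=
  ⟨fun h y hy x hx => (h x hx y hy).symm, fun h x hx y hy => (h y hy x hx).symm⟩

open Classical in
/-- The trigraph obtained from `G` by contracting each fibre of `p` to a vertex; `hp` says that
mixed pairs of fibres, which become semiadjacent, form a matching. -/
noncomputable def contract (G : Trigraph V) (p : V → W)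
    (hp : ∀ u v w, G.MixedFibres p u v → G.MixedFibres p u w → v = w) : Trigraph W where
  θ u v := if u = v then 0 else if G.StronglyComplete (p ⁻¹' {u}) (p ⁻¹' {v}) then 1
    else if G.StronglyAnticomplete (p ⁻¹' {u}) (p ⁻¹' {v}) then -1 else 0
  range_mem u v := by split_ifs <;> simp
  symm u v := by simp only [eq_comm, stronglyComplete_comm, stronglyAnticomplete_comm]
  refl_zero v := if_pos rfl
  semi_matching u v w huv huw hvw h h' := by
    exact hvw (hp u v w (by grind [MixedFibres]) (by grind [MixedFibres]))

theorem isContraction_contract {hp : ∀ u v w, G.MixedFibres p u v → G.MixedFibres p u w → v = w}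
    (hsurj : Function.Surjective p) (hclique : ∀ w, G.IsStrongClique (p ⁻¹' {w})) :
    G.IsContraction (G.contract p hp) p := by
  refine ⟨fun w => ⟨hsurj w, hclique w⟩, fun u v huv => ?_, ?_, fun u v huv => ?_⟩
  · exact Disjoint.preimage p (Set.disjoint_singleton.2 huv)
  · exact Set.eq_univ_of_forall fun x => Set.mem_iUnion.2 ⟨p x, rfl⟩
  · simp only [StrongAdj, StrongAntiAdj, SemiAdj, contract, if_neg huv]
    split_ifs <;> simp_all

/-- `x` and `y` are equal or lie on a common side of a square-connected pair. -/
def SameSide (G : Trigraph V) (x y : V) : Prop :=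
  x = y ∨ ∃ A B : Set V, G.SquareConnected A B ∧ x ∈ A ∧ y ∈ A

/-- `x` and `y` lie on opposite sides of a square-connected pair. -/
def OppositeSides (G : Trigraph V) (x y : V) : Prop :=
  ∃ A B : Set V, G.SquareConnected A B ∧ x ∈ A ∧ y ∈ B

theorem SameSide.symm : G.SameSide x y → G.SameSide y x
  | .inl h => .inl h.symm
  | .inr ⟨A, B, hAB, hx, hy⟩ => .inr ⟨A, B, hAB, hy, hx⟩

theorem SameSide.trans (hG : G.SidesSeparated) (hxy : G.SameSide x y) (hyz : G.SameSide y w) :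
    G.SameSide x w := by
  obtain rfl | ⟨A, B, hAB, hxA, hyA⟩ := hxy
  · exact hyz
  obtain rfl | ⟨C, D, hCD, hyC, hzC⟩ := hyz
  · exact .inr ⟨A, B, hAB, hxA, hyA⟩
  · exact .inr ⟨A ∪ C, B ∪ D, hAB.union hG hCD hyA hyC, .inl hxA, .inr hzC⟩

theorem SameSide.strongAdj (h : G.SameSide x y) (hne : x ≠ y) : G.StrongAdj x y := by
  obtain ⟨A, B, hAB, hx, hy⟩ := h.resolve_left hne
  exact hAB.left.isStrongClique hx hy hne

theorem OppositeSides.symm : G.OppositeSides x y → G.OppositeSides y x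
  | ⟨A, B, hAB, hx, hy⟩ => ⟨B, A, hAB.symm, hy, hx⟩

theorem OppositeSides.of_sameSide (hG : G.SidesSeparated) (hxy : G.SameSide x y)
    (hyw : G.OppositeSides y w) : G.OppositeSides x w := by
  obtain rfl | ⟨A, B, hAB, hxA, hyA⟩ := hxy
  · exact hyw
  obtain ⟨C, D, hCD, hyC, hwD⟩ := hyw
  exact ⟨A ∪ C, B ∪ D, hAB.union hG hCD hyA hyC, .inl hxA, .inr hwD⟩

theorem OppositeSides.sameSide (hG : G.SidesSeparated) (hxy : G.OppositeSides x y)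
    (hxw : G.OppositeSides x w) : G.SameSide y w := by
  obtain ⟨A, B, hAB, hxA, hyB⟩ := hxy
  obtain ⟨C, D, hCD, hxC, hwD⟩ := hxw
  exact .inr ⟨B ∪ D, A ∪ C, (hAB.union hG hCD hxA hxC).symm, .inl hyB, .inr hwD⟩

theorem OppositeSides.sameSide_of_semiAdj (hxy : G.OppositeSides x y) (hxw : G.SemiAdj x w) :
    G.SameSide y w := by
  obtain ⟨A, B, hAB, hxA, hyB⟩ := hxy
  exact .inr ⟨B, A, hAB.symm, hyB, hAB.left.mem_of_semiAdj hxA hxw⟩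

theorem SameSide.θ_eq_left (hxy : G.SameSide x y) (hne : ¬ G.SameSide x w)
    (hopp : ¬ G.OppositeSides x w) : G.θ x w = G.θ y w := by
  obtain rfl | ⟨A, B, hAB, hx, hy⟩ := hxy
  · rfl
  have hwA : w ∉ A := fun hwA => hne (.inr ⟨A, B, hAB, hx, hwA⟩)
  have hwB : w ∉ B := fun hwB => hopp ⟨A, B, hAB, hx, hwB⟩
  rw [G.symm x, G.symm y]
  rcases hAB.left.uniformOn w (by simp [hwA, hwB]) with h | h <;>
    exact Eq.trans (h x hx) (Eq.symm (h y hy))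

theorem θ_eq_of_sameSide (hG : G.SidesSeparated) {x' y' : V} (hx : G.SameSide x x')
    (hy : G.SameSide y y') (hne : ¬ G.SameSide x y) (hopp : ¬ G.OppositeSides x y) :
    G.θ x y = G.θ x' y' := by
  have hne' : ¬ G.SameSide y x' := fun h => hne (hx.trans hG h.symm)
  have hopp' : ¬ G.OppositeSides y x' := fun h => hopp (.of_sameSide hG hx h.symm)
  rw [hx.θ_eq_left hne hopp, G.symm, hy.θ_eq_left hne' hopp', G.symm]

/-- Lying on a common side of a square-connected pair, as a setoid; transitivity comes from the
union of overlapping pairs. -/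
def sameSideSetoid (hG : G.SidesSeparated) : Setoid V where
  r := G.SameSide
  iseqv := ⟨fun _ => .inl rfl, SameSide.symm, SameSide.trans hG⟩

/-- The projection of the vertices onto the classes of `sameSideSetoid`. -/
def sideClass (hG : G.SidesSeparated) : V → Quotient (sameSideSetoid hG) := Quotient.mk _

theorem sideClass_eq_iff {hG : G.SidesSeparated} :
    sideClass hG x = sideClass hG y ↔ G.SameSide x y :=
  Quotient.eq

theorem sideClass_surjective (hG : G.SidesSeparated) : Function.Surjective (sideClass hG) :=
  Quotient.mk_surjective

theorem isStrongClique_sideClass (hG : G.SidesSeparated) (q : Quotient (sameSideSetoid hG)) :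
    G.IsStrongClique (sideClass hG ⁻¹' {q}) := fun _ hx _ hy =>
  (sideClass_eq_iff.1 (hx.trans hy.symm)).strongAdj

theorem oppositeSides_or_semiAdj_of_mixedFibres {hG : G.SidesSeparated}
    (h : G.MixedFibres (sideClass hG) (sideClass hG x) (sideClass hG y)) :
    G.OppositeSides x y ∨ G.SemiAdj x y := by
  obtain ⟨hne, hcomp, hanti⟩ := h
  rw [ne_eq, sideClass_eq_iff] at hne
  refine or_iff_not_imp_left.2 fun hopp => ?_
  have hθ : ∀ x' ∈ sideClass hG ⁻¹' {sideClass hG x}, ∀ y' ∈ sideClass hG ⁻¹' {sideClass hG y},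
      G.θ x' y' = G.θ x y := fun x' hx y' hy =>
    (θ_eq_of_sameSide hG (sideClass_eq_iff.1 hx).symm (sideClass_eq_iff.1 hy).symm hne hopp).symm
  exact semiAdj_iff.2 ⟨fun e => hne (.inl e),
    fun h => hcomp fun x' hx y' hy => (hθ x' hx y' hy).trans h,
    fun h => hanti fun x' hx y' hy => (hθ x' hx y' hy).trans h⟩

theorem mixedFibres_sideClass_unique (hG : G.SidesSeparated)
    (q r s : Quotient (sameSideSetoid hG)) (hqr : G.MixedFibres (sideClass hG) q r)
    (hqs : G.MixedFibres (sideClass hG) q s) : r = s := by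
  obtain ⟨x, rfl⟩ := sideClass_surjective hG q
  obtain ⟨y, rfl⟩ := sideClass_surjective hG r
  obtain ⟨z, rfl⟩ := sideClass_surjective hG s
  rw [sideClass_eq_iff]
  rcases oppositeSides_or_semiAdj_of_mixedFibres hqr with hxy | hxy <;>
    rcases oppositeSides_or_semiAdj_of_mixedFibres hqs with hxz | hxz
  · exact hxy.sameSide hG hxz
  · exact hxy.sameSide_of_semiAdj hxz
  · exact (hxz.sameSide_of_semiAdj hxy).symm
  · exact .inl (hxy.eq hxz)

/-- The trigraph contracting all sides of square-connected pairs at once. -/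
noncomputable def sideQuotient (hG : G.SidesSeparated) : Trigraph (Quotient (sameSideSetoid hG)) :=
  G.contract (sideClass hG) (mixedFibres_sideClass_unique hG)

theorem isContraction_sideQuotient (hG : G.SidesSeparated) :
    G.IsContraction (sideQuotient hG) (sideClass hG) :=
  isContraction_contract (sideClass_surjective hG) (isStrongClique_sideClass hG)

theorem IsContraction.squareLinked_preimage (hp : G.IsContraction H p) (hG : G.SidesSeparated)
    (hker : ∀ x y, p x = p y ↔ G.SameSide x y) {X Y : Set W} (hXY : H.SquareConnected X Y) :
    G.SquareLinked (p ⁻¹' X) (p ⁻¹' Y) := by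
  rintro S ⟨x, hxX, hxS⟩ ⟨y, hyX, hyS⟩
  by_cases hsplit : ∃ u v, p u = p v ∧ p u ∈ X ∧ u ∈ S ∧ v ∉ S
  · obtain ⟨u, v, huv, huX, huS, hvS⟩ := hsplit
    obtain ⟨A, B, hAB, huA, hvA⟩ := ((hker u v).1 huv).resolve_left fun e => hvS (e ▸ huS)
    have hA : ∀ a ∈ A, p a = p u := fun a ha => (hker a u).2 (.inr ⟨A, B, hAB, ha, huA⟩)
    have hB : ∀ b ∈ B, p b ∈ Y := fun b hb => by
      refine hXY.left.mem_of_semiAdj huX (hp.semiAdj hAB.left huA (fun b' hb' => ?_) ?_)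
      · exact (hker b' b).2 (.inr ⟨B, A, hAB.symm, hb', hb⟩)
      · exact (hp.disjoint_image hG hAB).ne_of_mem ⟨u, huA, rfl⟩ ⟨b, hb, rfl⟩
    exact hAB.left.squareLinked.mono (fun a ha => by rwa [Set.mem_preimage, hA a ha]) hB
      ⟨u, huA, huS⟩ ⟨v, hvA, hvS⟩
  · push Not at hsplit
    have hS : ∀ z, p z ∈ X → p z ∈ p '' S → z ∈ S := fun z hz ⟨s, hs, hsz⟩ =>
      hsplit s z hsz (hsz ▸ hz) hs
    obtain ⟨u, ⟨hu, hus⟩, v, ⟨hv, hvS⟩, x', hx', w, hw, hsq⟩ := hXY.left.squareLinked (p '' S)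
      ⟨p x, hxX, x, hxS, rfl⟩ ⟨p y, hyX, fun h => hyS (hS y hyX h)⟩
    obtain ⟨a₁, a₂, b₂, b₁, rfl, rfl, rfl, rfl, hsq'⟩ := hp.exists_isSquare hsq
      (hXY.left.isStrongClique hu hv hsq.2.2.1.1)
      (hXY.right.isStrongClique hw hx' hsq.2.2.2.2.1.1)
    exact ⟨a₁, ⟨hu, hS a₁ hu hus⟩, a₂, ⟨hv, fun h => hvS ⟨a₂, h, rfl⟩⟩, b₁, hx', b₂, hw, hsq'⟩

theorem IsContraction.squareSide_preimage (hp : G.IsContraction H p) (hG : G.SidesSeparated)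
    (hker : ∀ x y, p x = p y ↔ G.SameSide x y) {X Y : Set W} (hXY : H.SquareConnected X Y) :
    G.SquareSide (p ⁻¹' X) (p ⁻¹' Y) where
  nontrivial := hXY.left.nontrivial.preimage hp.surjective
  isStrongClique x hx y hy hne := by
    by_cases hxy : p x = p y
    · exact hp.strongAdj_of_eq hxy hne
    · exact hp.strongAdj (hXY.left.isStrongClique hx hy hxy)
  uniformOn v hv := (hXY.left.uniformOn (p v) hv).imp (fun h x hx => hp.strongAdj (h (p x) hx))
    fun h x hx => hp.strongAntiAdj (h (p x) hx)
  squareLinked := hp.squareLinked_preimage hG hker hXY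

theorem IsContraction.laminar (hp : G.IsContraction H p) (hG : G.SidesSeparated)
    (hker : ∀ x y, p x = p y ↔ G.SameSide x y) : H.Laminar := by
  rintro ⟨X, Y, hXY⟩
  have hpre : G.SquareConnected (p ⁻¹' X) (p ⁻¹' Y) := squareConnected_iff.2
    ⟨hXY.disjoint.preimage p, hp.squareSide_preimage hG hker hXY,
      hp.squareSide_preimage hG hker hXY.symm⟩
  obtain ⟨u, hu, v, hv, huv⟩ := hXY.left.nontrivial
  obtain ⟨x, rfl⟩ := hp.surjective u
  obtain ⟨y, rfl⟩ := hp.surjective v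
  exact huv ((hker x y).2 (.inr ⟨_, _, hpre, hu, hv⟩))

theorem laminar_sideQuotient (hG : G.SidesSeparated) : (sideQuotient hG).Laminar :=
  (isContraction_sideQuotient hG).laminar hG fun _ _ => sideClass_eq_iff

/-! ### The universal laminar contraction -/

/-- `p` is a laminar contraction of `G` to `H` through which all laminar contractions of `G`
factor. Unlike optimality, this does not refer to numbers of vertices. -/
structure IsUniversalContraction (G : Trigraph V) (H : Trigraph W) (p : V → W) : Prop where
  isContraction : G.IsContraction H p
  laminar : H.Laminar
  exists_eq_comp : ∀ {W' : Type} {H' : Trigraph W'} {q : V → W'}, G.IsContraction H' q →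
    H'.Laminar → ∃ g : W → W', q = g ∘ p

theorem SidesSeparated.isUniversalContraction (hG : G.SidesSeparated) :
    G.IsUniversalContraction (sideQuotient hG) (sideClass hG) where
  isContraction := isContraction_sideQuotient hG
  laminar := laminar_sideQuotient hG
  exists_eq_comp {_ _ q} hq hlam := by
    refine ⟨Quotient.lift q ?_, rfl⟩
    rintro x y (rfl | ⟨A, B, hAB, hx, hy⟩)
    · rfl
    · exact hq.subsingleton_image hG hlam hAB ⟨x, hx, rfl⟩ ⟨y, hy, rfl⟩

theorem θ_eq_of_iff {u v : V} {u' v' : W} (hadj : G.StrongAdj u v ↔ H.StrongAdj u' v')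
    (hanti : G.StrongAntiAdj u v ↔ H.StrongAntiAdj u' v') : G.θ u v = H.θ u' v' := by
  have := G.range_mem u v
  have := H.range_mem u' v'
  unfold StrongAdj at hadj
  unfold StrongAntiAdj at hanti
  omega

theorem IsContraction.isomorphic {W' : Type} {H' : Trigraph W'} (hp : G.IsContraction H p)
    (f : W ≃ W') (hq : G.IsContraction H' (f ∘ p)) : H.Isomorphic H' := by
  refine ⟨f, fun u v => ?_⟩
  obtain rfl | huv := eq_or_ne u v
  · rw [H.refl_zero, H'.refl_zero]
  have hfib : ∀ w, f ∘ p ⁻¹' {f w} = p ⁻¹' {w} := fun w => by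
    rw [Set.preimage_comp, ← Set.image_singleton, Equiv.preimage_image]
  have hfuv := f.injective.ne huv
  apply θ_eq_of_iff
  · rw [← hq.stronglyComplete_iff hfuv, ← hp.stronglyComplete_iff huv, hfib, hfib]
  · rw [← hq.stronglyAnticomplete_iff hfuv, ← hp.stronglyAnticomplete_iff huv, hfib, hfib]

theorem Isomorphic.symm : G.Isomorphic H → H.Isomorphic G
  | ⟨f, hf⟩ => ⟨f.symm, fun u v => by simpa using (hf (f.symm u) (f.symm v)).symm⟩

theorem Isomorphic.trans {W' : Type} {H' : Trigraph W'} :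
    G.Isomorphic H → H.Isomorphic H' → G.Isomorphic H'
  | ⟨f, hf⟩, ⟨g, hg⟩ => ⟨f.trans g, fun u v => (hg (f u) (f v)).trans (hf u v)⟩

section Finite

variable [Finite V]

theorem IsUniversalContraction.optimalAntithickening (hp : G.IsUniversalContraction H p) :
    G.OptimalAntithickening H fun w => p ⁻¹' {w} := by
  refine ⟨hp.isContraction, hp.laminar, fun W' H' I hI hlam => ?_⟩
  obtain ⟨q, hq⟩ := hI.exists_isContraction
  obtain ⟨g, rfl⟩ := hp.exists_eq_comp hq hlam
  have := Finite.of_surjective p hp.isContraction.surjective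
  exact Nat.card_le_card_of_surjective g hq.surjective.of_comp

theorem OptimalAntithickening.isomorphic {W' : Type} {H' : Trigraph W'} {I : W' → Set V}
    (h : G.OptimalAntithickening H' I) (hp : G.IsUniversalContraction H p) : H.Isomorphic H' := by
  obtain ⟨hI, hlam, hmax⟩ := h
  obtain ⟨q, hq⟩ := hI.exists_isContraction
  obtain ⟨g, rfl⟩ := hp.exists_eq_comp hq hlam
  have := Finite.of_surjective p hp.isContraction.surjective
  have hcard := hmax W H _ hp.isContraction hp.laminar
  have hg := hq.surjective.of_comp.bijective_of_nat_card_le hcard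
  exact hp.isContraction.isomorphic (.ofBijective g hg) hq

end Finite

end Trigraph

theorem optimal_antithickening_exists_unique_general {V : Type} [Finite V] (G : Trigraph V)
    (hG : G.SidesSeparated) :
    (∃ (W : Type) (G' : Trigraph W) (I : W → Set V), G.OptimalAntithickening G' I) ∧
    (∀ (W1 : Type) (G1 : Trigraph W1) (I1 : W1 → Set V)
       (W2 : Type) (G2 : Trigraph W2) (I2 : W2 → Set V),
       G.OptimalAntithickening G1 I1 → G.OptimalAntithickening G2 I2 →
       G1.Isomorphic G2) :=
  have hQ := hG.isUniversalContraction
  ⟨⟨_, _, _, hQ.optimalAntithickening⟩, fun _ _ _ _ _ _ h₁ h₂ =>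
    (h₁.isomorphic hQ).symm.trans (h₂.isomorphic hQ)⟩

/-- Every connected non-degenerate trigraph has an optimal antithickening,
and any two optimal antithickenings of it are isomorphic as trigraphs. -/
theorem optimal_antithickening_exists_unique {V : Type} [Fintype V] (G : Trigraph V)
    (hconn : G.Connected) (hnd : G.NonDegenerate) :
    (∃ (W : Type) (G' : Trigraph W) (I : W → Set V), G.OptimalAntithickening G' I) ∧
    (∀ (W1 : Type) (G1 : Trigraph W1) (I1 : W1 → Set V)
       (W2 : Type) (G2 : Trigraph W2) (I2 : W2 → Set V),
       G.OptimalAntithickening G1 I1 → G.OptimalAntithickening G2 I2 →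
       G1.Isomorphic G2) :=
  optimal_antithickening_exists_unique_general G (hconn.sidesSeparated hnd)
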